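/- For the codifferential d = φ^{(1,1)}_m (i.e. ψ^{e_1e_1}_{f_s}) on an r|s-dimensional graded space with r, s ≥ 1, the cohomology dimensions are h^n = (r+s−1)^{n+1} if n ≡ 0 or 1 (mod 4), and h^n = (r+s−1)^{n+1} + 1 if n ≡ 2 or 3 (mod 4), for all n ≥ 0. -/

import Mathlib

open Finsupp Submodule LinearMap

set_option maxSynthPendingDepth 2

namespace NilpotentCohomology

/-- The big space of cochains of all degrees: formal ℂ-linear combinations of
basis symbols `φ^I_x` indexed by a multi-index `I : List (Fin m)` and an output
index `x : Fin m`. -/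
abbrev Cochain (m : ℕ) : Type := (List (Fin m) × Fin m) →₀ ℂ

/-- Parity of an index: `0` if the index is among the first `r` (even) ones, `1` otherwise. -/
def par (r : ℕ) {m : ℕ} (i : Fin m) : ℕ := if (i : ℕ) < r then 0 else 1

/-- Parity of a multi-index: the sum of the parities of its entries. -/
def lpar (r : ℕ) {m : ℕ} (I : List (Fin m)) : ℕ := (I.map (par r)).sum

/-- Parity of a basis cochain `φ^I_x`: `|I| + |x|`. -/
def ppar (r : ℕ) {m : ℕ} (p : List (Fin m) × Fin m) : ℕ := lpar r p.1 + par r p.2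

/-- `(I, J, k)`: the multi-index `I` with its `k`-th entry (0-indexed) replaced by the string `J`. -/
def insertAt {m : ℕ} (I J : List (Fin m)) (k : ℕ) : List (Fin m) :=
  I.take k ++ J ++ I.drop (k + 1)

/-- The insertion product of two basis cochains `φ^I_x ∘ φ^J_y`. -/
noncomputable def basisComp (r : ℕ) {m : ℕ} (p q : List (Fin m) × Fin m) : Cochain m :=
  ∑ k : Fin p.1.length,
    if p.1.get k = q.2 then
      ((-1 : ℂ) ^ (lpar r (p.1.take ((k : ℕ) + 1)) * ppar r q)) •
        Finsupp.single (insertAt p.1 q.1 (k : ℕ), p.2) (1 : ℂ)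
    else 0

/-- The insertion product, extended bilinearly. -/
noncomputable def comp (r : ℕ) {m : ℕ} :
    Cochain m →ₗ[ℂ] Cochain m →ₗ[ℂ] Cochain m :=
  Finsupp.lsum ℂ fun p => LinearMap.toSpanSingleton ℂ _
    (Finsupp.lsum ℂ fun q => LinearMap.toSpanSingleton ℂ (Cochain m) (basisComp r p q))

/-- The bracket `[φ, ψ] = φ∘ψ − (−1)^{|φ||ψ|} ψ∘φ` of two parity-homogeneous cochains
of parities `pf` and `pg`. -/
noncomputable def bracket (r : ℕ) {m : ℕ} (pf pg : ℕ) (f g : Cochain m) : Cochain m :=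
  comp r f g - ((-1 : ℂ) ^ (pf * pg)) • comp r g f

/-- The quadratic cochain `φ^{(a,a)}_b`. -/
noncomputable def dd {m : ℕ} (a b : Fin m) : Cochain m :=
  Finsupp.single ([a, a], b) (1 : ℂ)

/-- The linear map multiplying each basis cochain by `(−1)^{its parity}`. -/
noncomputable def twist (r : ℕ) {m : ℕ} : Cochain m →ₗ[ℂ] Cochain m :=
  Finsupp.lsum ℂ fun p => LinearMap.toSpanSingleton ℂ (Cochain m)
    (((-1 : ℂ) ^ (ppar r p)) • Finsupp.single p (1 : ℂ))

/-- The coboundary operator `D(φ) = [d, φ] = d∘φ − (−1)^{|d||φ|} φ∘d` for the odd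
codifferential `d = φ^{(a,a)}_b`, extended linearly from parity-homogeneous `φ`. -/
noncomputable def Dop (r : ℕ) {m : ℕ} (a b : Fin m) : Cochain m →ₗ[ℂ] Cochain m :=
  comp r (dd a b) - ((comp r).flip (dd a b)) ∘ₗ twist r

/-- `C^n`: the span of the basis cochains `φ^I_x` with `I` of length `n`. -/
noncomputable def Cn (m n : ℕ) : Submodule ℂ (Cochain m) :=
  Submodule.span ℂ
    {f | ∃ I : List (Fin m), I.length = n ∧ ∃ x : Fin m, f = Finsupp.single (I, x) 1}

/-- `C^n_x`: the span of the basis cochains `φ^I_x` with `I` of length `n` and output `x`. -/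
noncomputable def Cnx (m : ℕ) (n : ℕ) (x : Fin m) : Submodule ℂ (Cochain m) :=
  Submodule.span ℂ
    {f | ∃ I : List (Fin m), I.length = n ∧ f = Finsupp.single (I, x) 1}

/-- The projection onto the cochains with output index `x`. -/
noncomputable def projOut {m : ℕ} (x : Fin m) : Cochain m →ₗ[ℂ] Cochain m :=
  Finsupp.lsum ℂ fun p => LinearMap.toSpanSingleton ℂ (Cochain m)
    (if p.2 = x then Finsupp.single p (1 : ℂ) else 0)

/-- `λ^J (φ^I_x) = φ^{JI}_x`, extended linearly. -/
noncomputable def lam {m : ℕ} (J : List (Fin m)) : Cochain m →ₗ[ℂ] Cochain m :=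
  Finsupp.lsum ℂ fun p => LinearMap.toSpanSingleton ℂ (Cochain m)
    (Finsupp.single (J ++ p.1, p.2) (1 : ℂ))

/-- `ρ^J (φ^I_x) = (−1)^{|I||J|} φ^{IJ}_x`, extended linearly. -/
noncomputable def rho (r : ℕ) {m : ℕ} (J : List (Fin m)) : Cochain m →ₗ[ℂ] Cochain m :=
  Finsupp.lsum ℂ fun p => LinearMap.toSpanSingleton ℂ (Cochain m)
    (((-1 : ℂ) ^ (lpar r p.1 * lpar r J)) • Finsupp.single (p.1 ++ J, p.2) (1 : ℂ))

/-- `θ = λ^{(a,b)} − λ^{(b,a)}`. -/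
noncomputable def theta {m : ℕ} (a b : Fin m) : Cochain m →ₗ[ℂ] Cochain m :=
  lam [a, b] - lam [b, a]

/-- `τ`: swaps the outputs `a` and `b` of basis cochains (identity on other outputs). -/
noncomputable def tau {m : ℕ} (a b : Fin m) : Cochain m →ₗ[ℂ] Cochain m :=
  Finsupp.lsum ℂ fun p => LinearMap.toSpanSingleton ℂ (Cochain m)
    (Finsupp.single (p.1, if p.2 = a then b else if p.2 = b then a else p.2) (1 : ℂ))

/-! ### Full cohomology -/

/-- Cocycles of degree `n` of the full complex. -/
noncomputable def Zfull (r : ℕ) {m : ℕ} (a b : Fin m) (n : ℕ) : Submodule ℂ (Cochain m) :=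
  Cn m n ⊓ LinearMap.ker (Dop r a b)

/-- Coboundaries of degree `n` of the full complex (`C^{-1} = 0`). -/
noncomputable def Bfull (r : ℕ) {m : ℕ} (a b : Fin m) : ℕ → Submodule ℂ (Cochain m)
  | 0 => ⊥
  | n + 1 => Submodule.map (Dop r a b) (Cn m n)

/-- The full cohomology `H^n = Z^n / B^n`. -/
noncomputable abbrev Hfull (r : ℕ) {m : ℕ} (a b : Fin m) (n : ℕ) : Type :=
  Zfull r a b n ⧸ (Bfull r a b n).comap (Zfull r a b n).subtype

/-! ### The restricted complexes -/

/-- The restricted differential `D_x`: the `e₁`-output component of `D` when `x = a`,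
and `D` itself (which preserves output `x`) otherwise. -/
noncomputable def Dx (r : ℕ) {m : ℕ} (a b x : Fin m) : Cochain m →ₗ[ℂ] Cochain m :=
  if x = a then projOut a ∘ₗ Dop r a b else Dop r a b

/-- Cocycles of the restricted complex `(C^•_x, D_x)`. -/
noncomputable def Zx (r : ℕ) {m : ℕ} (a b x : Fin m) (n : ℕ) : Submodule ℂ (Cochain m) :=
  Cnx m n x ⊓ LinearMap.ker (Dx r a b x)

/-- Coboundaries of the restricted complex `(C^•_x, D_x)` (`C^{-1}_x = 0`). -/
noncomputable def Bx (r : ℕ) {m : ℕ} (a b x : Fin m) : ℕ → Submodule ℂ (Cochain m)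
  | 0 => ⊥
  | n + 1 => Submodule.map (Dx r a b x) (Cnx m n x)

/-- Cohomology `H^n_x` of the restricted complex `(C^•_x, D_x)`. -/
noncomputable abbrev Hx (r : ℕ) {m : ℕ} (a b x : Fin m) (n : ℕ) : Type :=
  Zx r a b x n ⧸ (Bx r a b x n).comap (Zx r a b x n).subtype

/-! ### The subcomplex `C^•_a ⊕ C^•_b` and the `b`-output complex -/

/-- `C^n_a ⊕ C^n_b` (internal direct sum). -/
noncomputable def Cpair (m : ℕ) (a b : Fin m) (n : ℕ) : Submodule ℂ (Cochain m) :=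
  Cnx m n a ⊔ Cnx m n b

noncomputable def Zpair (r : ℕ) {m : ℕ} (a b : Fin m) (n : ℕ) : Submodule ℂ (Cochain m) :=
  Cpair m a b n ⊓ LinearMap.ker (Dop r a b)

noncomputable def Bpair (r : ℕ) {m : ℕ} (a b : Fin m) : ℕ → Submodule ℂ (Cochain m)
  | 0 => ⊥
  | n + 1 => Submodule.map (Dop r a b) (Cpair m a b n)

/-- `H^n`: the cohomology of the subcomplex `(C^•_a ⊕ C^•_b, D)`. -/
noncomputable abbrev Hpair (r : ℕ) {m : ℕ} (a b : Fin m) (n : ℕ) : Type :=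
  Zpair r a b n ⧸ (Bpair r a b n).comap (Zpair r a b n).subtype

/-- Cocycles of `(C^•_b, D_b)`, where `D_b` is the restriction of `D`. -/
noncomputable def Zm (r : ℕ) {m : ℕ} (a b : Fin m) (n : ℕ) : Submodule ℂ (Cochain m) :=
  Cnx m n b ⊓ LinearMap.ker (Dop r a b)

noncomputable def Bm (r : ℕ) {m : ℕ} (a b : Fin m) : ℕ → Submodule ℂ (Cochain m)
  | 0 => ⊥
  | n + 1 => Submodule.map (Dop r a b) (Cnx m n b)

/-- `H^n_b`: the cohomology of `(C^•_b, D_b)`. -/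
noncomputable abbrev Hm (r : ℕ) {m : ℕ} (a b : Fin m) (n : ℕ) : Type :=
  Zm r a b n ⧸ (Bm r a b n).comap (Zm r a b n).subtype

lemma Zm_le_Zpair (r : ℕ) {m : ℕ} (a b : Fin m) (n : ℕ) :
    Zm r a b n ≤ Zpair r a b n :=
  inf_le_inf le_sup_right le_rfl

lemma Bm_le_Bpair (r : ℕ) {m : ℕ} (a b : Fin m) : ∀ n : ℕ, Bm r a b n ≤ Bpair r a b n
  | 0 => bot_le
  | _ + 1 => Submodule.map_mono le_sup_right

/-- The natural map `H^n_b → H^n` induced by the inclusion of cocycles. -/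
noncomputable def iotaHm (r : ℕ) {m : ℕ} (a b : Fin m) (n : ℕ) :
    Hm r a b n →ₗ[ℂ] Hpair r a b n :=
  Submodule.mapQ _ _ (Submodule.inclusion (Zm_le_Zpair r a b n))
    (fun z hz => Bm_le_Bpair r a b n hz)

/-- `Ĥ^n_f`: the image of `H^n_b` in `H^n`. -/
noncomputable def Hfhat (r : ℕ) {m : ℕ} (a b : Fin m) (n : ℕ) : Submodule ℂ (Hpair r a b n) :=
  LinearMap.range (iotaHm r a b n)

/-- `Ĥ^n_e = H^n / Ĥ^n_f`. -/
noncomputable abbrev Hehat (r : ℕ) {m : ℕ} (a b : Fin m) (n : ℕ) : Type :=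
  Hpair r a b n ⧸ Hfhat r a b n

/-! ### The spaces `Ĉ^n_x` of nontrivial cocycles -/

/-- The recursively defined subspaces `Ĉ^n_x` of nontrivial cocycles. -/
noncomputable def Chat (r : ℕ) {m : ℕ} (a b x : Fin m) : ℕ → Submodule ℂ (Cochain m)
  | 0 => Submodule.span ℂ {Finsupp.single (([] : List (Fin m)), x) 1}
  | 1 => Submodule.span ℂ
      ({Finsupp.single ([a], x) 1} ∪
        ⋃ c ∈ {c : Fin m | c ≠ a ∧ c ≠ b}, lam [c] '' (Chat r a b x 0 : Set (Cochain m)))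
  | n + 2 => Submodule.span ℂ
      ((⋃ c ∈ {c : Fin m | c ≠ a ∧ c ≠ b},
          lam [c] '' (Chat r a b x (n + 1) : Set (Cochain m))) ∪
        (theta a b '' (Chat r a b x n : Set (Cochain m))) ∪
        ⋃ c ∈ {c : Fin m | c ≠ a ∧ c ≠ b},
          (lam [a] + rho r [a]) '' (lam [c] '' (Chat r a b x n : Set (Cochain m))))

/-!
Write `D = ∂ + E` with `E φ = d ∘ φ`. Up to signs, `∂` replaces the letters `b` of a word by `a a`
one at a time, so `b` and the block `a a` cancel up to homotopy, and `(C, ∂)` retracts onto a model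
with zero differential, whose basis consists of the words without `b`; its inclusion sends a block
`a a` to the cocycle `a b - b a`. The operator `E` factors through the relabelling `a ↦ b` of
outputs, which has square zero and commutes up to sign with the homotopy `h`, so `E h E = 0`. The
perturbation lemma thus terminates, and `H(C, D)` is the cohomology of the model under
`φ^I_a ↦ ± φ^{aI}_b + φ^{Ia}_b`, where each of the two terms is present iff the run of `a`s at its
end of `I` is even, and `φ^I_x ↦ 0` for `x ≠ a`. The coboundaries of the `φ^I_a` with even initial
run form a basis of all coboundaries, except that the coboundary of `φ^{a^n}_a` has the coefficient
`(-1)^(n/2) + 1`, which vanishes for `n ≡ 2 (mod 4)`.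
-/

section Cohomology

variable {K V : Type*} [Field K] [AddCommGroup V] [Module K V]

/-- The grading `C` moved up by one degree, with `0` in degree `0`. -/
def lower (C : ℕ → Submodule K V) : ℕ → Submodule K V
  | 0 => ⊥
  | n + 1 => C n

/-- The degree `n` cocycles of the graded space `C` with differential `D`. -/
def cocycles (D : Module.End K V) (C : ℕ → Submodule K V) (n : ℕ) : Submodule K V :=
  C n ⊓ ker D

/-- The degree `n` coboundaries of the graded space `C` with differential `D`. -/
def coboundaries (D : Module.End K V) (C : ℕ → Submodule K V) (n : ℕ) : Submodule K V :=
  (lower C n).map D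

/-- The degree `n` cohomology of the graded space `C` with differential `D`. -/
abbrev Cohomology (D : Module.End K V) (C : ℕ → Submodule K V) (n : ℕ) : Type _ :=
  cocycles D C n ⧸ (coboundaries D C n).comap (cocycles D C n).subtype

lemma map_lower_le {f : Module.End K V} {C M : ℕ → Submodule K V}
    (hf : ∀ n, (C n).map f ≤ M n) : ∀ n, (lower C n).map f ≤ lower M n
  | 0 => (Submodule.map_bot f).le
  | n + 1 => hf n

lemma map_lower_le_add {f : Module.End K V} {C : ℕ → Submodule K V} {k : ℕ}
    (hf : ∀ n, (C n).map f ≤ C (n + k)) : ∀ n, (lower C n).map f ≤ lower C (n + k)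
  | 0 => (Submodule.map_bot f).trans_le bot_le
  | n + 1 => (hf n).trans_eq (by rw [Nat.add_right_comm, lower])

lemma finrank_map_add_finrank_inf_ker (f : Module.End K V) (U : Submodule K V)
    [FiniteDimensional K U] :
    Module.finrank K (U.map f) + Module.finrank K (U ⊓ ker f : Submodule K V) =
      Module.finrank K U := by
  rw [← (f.domRestrict U).finrank_range_add_finrank_ker, range_domRestrict, ker_domRestrict,
    ← finrank_map_subtype_eq, map_comap_subtype]

lemma coboundaries_le_cocycles {D : Module.End K V} {C : ℕ → Submodule K V} (hD : D * D = 0)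
    (hC : ∀ n, (C n).map D ≤ C (n + 1)) : ∀ n, coboundaries D C n ≤ cocycles D C n
  | 0 => (Submodule.map_bot D).trans_le bot_le
  | n + 1 => le_inf (hC n) (Submodule.map_le_iff_le_comap.2 fun x _ => LinearMap.congr_fun hD x)

lemma finrank_cohomology_add {D : Module.End K V} {C : ℕ → Submodule K V} (hD : D * D = 0)
    (hC : ∀ n, (C n).map D ≤ C (n + 1)) (n : ℕ) [FiniteDimensional K (C n)] :
    Module.finrank K (Cohomology D C n) + Module.finrank K (coboundaries D C n) +
      Module.finrank K (coboundaries D C (n + 1)) = Module.finrank K (C n) := by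
  have : FiniteDimensional K (cocycles D C n) := finiteDimensional_of_le inf_le_left
  have hquot := finrank_quotient_add_finrank
    ((coboundaries D C n).comap (cocycles D C n).subtype)
  rw [← finrank_map_subtype_eq, map_comap_subtype,
    inf_eq_right.2 (coboundaries_le_cocycles hD hC n)] at hquot
  rw [hquot, add_comm]
  exact finrank_map_add_finrank_inf_ker D (C n)

/-- `ι` and `p` are chain maps between a differential `D` and a differential `d` on a model,
and `h` is a homotopy from the identity to `ι p`. The model lives in the same space, so all five
maps are elements of one (endomorphism) ring. -/
structure IsHomotopyRetract {R : Type*} [Ring R] (D d ι p h : R) : Prop where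
  incl_comm : D * ι = ι * d
  proj_comm : p * D = d * p
  homotopy : D * h + h * D = 1 - ι * p

namespace IsHomotopyRetract

section Perturbation

variable {R : Type*} [Ring R] {D E ι p h : R}

lemma perturbation_sandwich (H : IsHomotopyRetract D 0 ι p h) (hDE : D * E = -(E * D))
    (hEE : E * E = 0) (hEhE : E * h * E = 0) : E * (ι * p) * E = 0 := by
  rw [← sub_sub_cancel 1 (ι * p), ← H.homotopy]
  linear_combination (norm := noncomm_ring)
    hEE - hDE * h * E + D * hEhE - E * h * hDE + hEhE * D

/-- The homological perturbation lemma for a model with zero differential. Its power series stop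
after the first-order terms because `E h E = 0`. -/
theorem perturb (H : IsHomotopyRetract D 0 ι p h) (hDE : D * E = -(E * D)) (hEE : E * E = 0)
    (hEhE : E * h * E = 0) :
    IsHomotopyRetract (D + E) (p * E * ι) (ι - h * E * ι) (p - p * E * h) (h - h * E * h) := by
  have hEιpE := H.perturbation_sandwich hDE hEE hEhE
  have hι : D * ι = 0 := by simpa only [mul_zero] using H.incl_comm
  have hp : p * D = 0 := by simpa only [zero_mul] using H.proj_comm
  have hιp : ι * p = 1 - (D * h + h * D) := by rw [H.homotopy, sub_sub_cancel]
  refine ⟨?_, ?_, ?_⟩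
  · linear_combination (norm := noncomm_ring)
      hι - hEhE * ι + h * hEιpE * ι - hιp * E * ι + h * hDE * ι - h * E * hι
  · linear_combination (norm := noncomm_ring)
      hp - p * hEhE + p * hEιpE * h - p * E * hιp + p * hDE * h - hp * E * h
  · linear_combination (norm := noncomm_ring)
      hιp - hEhE * h - h * hEhE + h * hEιpE * h - hιp * E * h - h * E * hιp + h * hDE * h

lemma perturbed_proj_mul_incl (E : R) (hph : p * h = 0) (hhι : h * ι = 0) (hhh : h * h = 0) :
    (p - p * E * h) * (ι - h * E * ι) = p * ι := by
  linear_combination (norm := noncomm_ring)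
    -hph * E * ι - p * E * hhι + p * E * hhh * E * ι

end Perturbation

theorem finrank_cohomology_eq {D d ι p h : Module.End K V} (H : IsHomotopyRetract D d ι p h)
    {C M : ℕ → Submodule K V} (hι : ∀ n, (M n).map ι ≤ C n) (hp : ∀ n, (C n).map p ≤ M n)
    (hh : ∀ n, (C n).map h ≤ lower C n) (hpι : ∀ n, ∀ w ∈ M n, p (ι w) = w) (n : ℕ) :
    Module.finrank K (Cohomology D C n) = Module.finrank K (Cohomology d M n) := by
  have incl_comm := LinearMap.congr_fun H.incl_comm
  have proj_comm := LinearMap.congr_fun H.proj_comm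
  have homotopy := LinearMap.congr_fun H.homotopy
  have hp_cocycles : ∀ z ∈ cocycles D C n, p z ∈ cocycles d M n := fun _ hz =>
    ⟨hp n (mem_map_of_mem hz.1), (proj_comm _).symm.trans (by simp [mem_ker.1 hz.2])⟩
  let φ : cocycles D C n →ₗ[K] Cohomology d M n :=
    Submodule.mkQ _ ∘ₗ p.restrict hp_cocycles
  have hφ : Function.Surjective φ := by
    refine (Submodule.mkQ_surjective _).comp fun w => ?_
    have hw : D (ι w) = 0 := (incl_comm w).trans (by simp [mem_ker.1 w.2.2])
    exact ⟨⟨ι w, hι n (mem_map_of_mem w.2.1), hw⟩, Subtype.ext (hpι n w w.2.1)⟩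
  have hker : ker φ = (coboundaries D C n).comap (cocycles D C n).subtype := by
    ext z
    rw [ker_comp, ker_mkQ]
    constructor
    · rintro ⟨w, hw, hwz : d w = p z⟩
      refine ⟨ι w + h z, add_mem (map_lower_le hι n (mem_map_of_mem hw))
        (hh n (mem_map_of_mem z.2.1)), ?_⟩
      have hz : D (h z) = z - ι (p z) := by simpa [mem_ker.1 z.2.2] using homotopy z
      rw [map_add, hz, ← hwz, show D (ι w) = ι (d w) from incl_comm w, add_sub_cancel,
        Submodule.subtype_apply]
    · rintro ⟨y, hy, hyz : D y = z⟩
      refine ⟨p y, map_lower_le hp n (mem_map_of_mem hy), (proj_comm y).symm.trans ?_⟩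
      exact congrArg p hyz
  exact ((quotEquivOfEq _ _ hker.symm).trans (φ.quotKerEquivOfSurjective hφ)).finrank_eq

end IsHomotopyRetract

end Cohomology

section Operators

variable {r m : ℕ} {a b : Fin m}

/-- The linear map `φ^I_a ↦ φ^I_b` that kills all outputs other than `a`. -/
noncomputable def relabel (a b : Fin m) : Module.End ℂ (Cochain m) :=
  Finsupp.linearCombination ℂ fun p => if p.2 = a then single (p.1, b) 1 else 0

/-- The part `φ ↦ −(−1)^{|φ|} φ ∘ d` of the coboundary operator, which acts on the words and
fixes the outputs. -/
noncomputable def wordDiff (r : ℕ) (a b : Fin m) : Module.End ℂ (Cochain m) :=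
  -((comp r).flip (dd a b) ∘ₗ twist r)

/-- The part `φ ↦ d ∘ φ` of the coboundary operator, for an even index `a`. -/
noncomputable def endsDiff (r : ℕ) (a b : Fin m) : Module.End ℂ (Cochain m) :=
  (lam [a] + rho r [a]) * relabel a b

lemma ne_of_par (ha : par r a = 0) (hb : par r b = 1) : a ≠ b := by
  rintro rfl
  omega

lemma hom_ext_cons {V : Type*} [AddCommGroup V] [Module ℂ V] {f g : Cochain m →ₗ[ℂ] V}
    (nil : ∀ x, f (single ([], x) 1) = g (single ([], x) 1))
    (cons : ∀ c u, f u = g u → f (lam [c] u) = g (lam [c] u)) : f = g := by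
  refine Finsupp.lhom_ext' fun ⟨I, x⟩ => LinearMap.ext_ring ?_
  induction I with
  | nil => exact nil x
  | cons c I ih => simpa [lam] using cons c _ ih

lemma hom_ext_single {V : Type*} [AddCommGroup V] [Module ℂ V] {f g : Cochain m →ₗ[ℂ] V}
    (h : ∀ I x, f (single (I, x) 1) = g (single (I, x) 1)) : f = g :=
  Finsupp.lhom_ext' fun ⟨I, x⟩ => LinearMap.ext_ring (h I x)

@[simp]
lemma lam_single (J I : List (Fin m)) (x : Fin m) (z : ℂ) :
    lam J (single (I, x) z) = single (J ++ I, x) z := by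
  simp [lam]

lemma lam_append (I J : List (Fin m)) (u : Cochain m) : lam (I ++ J) u = lam I (lam J u) := by
  suffices lam (I ++ J) = lam I * lam J from LinearMap.congr_fun this u
  exact hom_ext_single fun K x => by simp

@[simp]
lemma lam_cons_cons (c d : Fin m) (I : List (Fin m)) (u : Cochain m) :
    lam (c :: d :: I) u = lam [c] (lam (d :: I) u) :=
  lam_append [c] (d :: I) u

lemma theta_apply (a b : Fin m) (u : Cochain m) :
    theta a b u = lam [a] (lam [b] u) - lam [b] (lam [a] u) := by
  simp [theta]

lemma rho_single (ha : par r a = 0) (I : List (Fin m)) (x : Fin m) (z : ℂ) :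
    rho r [a] (single (I, x) z) = single (I ++ [a], x) z := by
  simp [rho, lpar, ha]

lemma rho_lam (ha : par r a = 0) (J : List (Fin m)) (u : Cochain m) :
    rho r [a] (lam J u) = lam J (rho r [a] u) := by
  suffices rho r [a] * lam J = lam J * rho r [a] from LinearMap.congr_fun this u
  exact hom_ext_single fun K x => by simp [rho_single ha]

lemma twist_single (I : List (Fin m)) (x : Fin m) (z : ℂ) :
    twist r (single (I, x) z) = single (I, x) ((-1) ^ ppar r (I, x) * z) := by
  simp [twist, mul_comm]

lemma twist_twist (u : Cochain m) : twist r (twist r u) = u := by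
  suffices twist r * twist r = (1 : Module.End ℂ (Cochain m)) from LinearMap.congr_fun this u
  refine hom_ext_single fun I x => ?_
  simp [twist_single, ← mul_pow]

lemma twist_lam (c : Fin m) (u : Cochain m) :
    twist r (lam [c] u) = (-1 : ℂ) ^ par r c • lam [c] (twist r u) := by
  suffices twist r * lam [c] = (-1 : ℂ) ^ par r c • (lam [c] * twist r) from
    LinearMap.congr_fun this u
  refine hom_ext_single fun I x => ?_
  simp [twist_single, ppar, lpar, ← pow_add, add_assoc]

lemma twist_rho (ha : par r a = 0) (u : Cochain m) :
    twist r (rho r [a] u) = rho r [a] (twist r u) := by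
  suffices twist r * rho r [a] = rho r [a] * twist r from LinearMap.congr_fun this u
  refine hom_ext_single fun I x => ?_
  simp [twist_single, rho_single ha, ppar, lpar, ha]

@[simp]
lemma relabel_single (I : List (Fin m)) (x : Fin m) (z : ℂ) :
    relabel a b (single (I, x) z) = if x = a then single (I, b) z else 0 := by
  simp [relabel]

lemma relabel_lam (J : List (Fin m)) (u : Cochain m) :
    relabel a b (lam J u) = lam J (relabel a b u) := by
  suffices relabel a b * lam J = lam J * relabel a b from LinearMap.congr_fun this u
  refine hom_ext_single fun I x => ?_
  by_cases hx : x = a <;> simp [hx]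

lemma relabel_rho (ha : par r a = 0) (u : Cochain m) :
    relabel a b (rho r [a] u) = rho r [a] (relabel a b u) := by
  suffices relabel a b * rho r [a] = rho r [a] * relabel a b from LinearMap.congr_fun this u
  refine hom_ext_single fun I x => ?_
  by_cases hx : x = a <;> simp [hx, rho_single ha]

lemma relabel_relabel (hab : b ≠ a) (u : Cochain m) : relabel a b (relabel a b u) = 0 := by
  suffices relabel a b * relabel a b = 0 from LinearMap.congr_fun this u
  refine hom_ext_single fun I x => ?_
  by_cases hx : x = a <;> simp [hx, hab]

lemma relabel_twist (ha : par r a = 0) (hb : par r b = 1) (u : Cochain m) :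
    relabel a b (twist r u) = -twist r (relabel a b u) := by
  suffices relabel a b * twist r = -(twist r * relabel a b) from LinearMap.congr_fun this u
  refine hom_ext_single fun I x => ?_
  by_cases hx : x = a <;> simp [hx, twist_single, ppar, ha, hb, pow_succ]

lemma comp_single_single (p q : List (Fin m) × Fin m) (z : ℂ) :
    comp r (single p z) (single q 1) = z • basisComp r p q := by
  simp [comp]

lemma basisComp_dd_cons (ha : par r a = 0) (hb : par r b = 1) (c : Fin m) (I : List (Fin m))
    (x : Fin m) :
    basisComp r (c :: I, x) ([a, a], b) =
      (-1 : ℂ) ^ par r c • lam [c] (basisComp r (I, x) ([a, a], b)) -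
        if c = b then single ([a, a] ++ I, x) 1 else 0 := by
  have hq : ppar r ([a, a], b) = 1 := by simp [ppar, lpar, ha, hb]
  simp only [basisComp, hq, mul_one, List.length_cons, Fin.sum_univ_succ, map_sum,
    Finset.smul_sum]
  rw [sub_eq_neg_add]
  congr 1
  · by_cases hc : c = b <;> simp [hc, hb, lpar, insertAt]
  · refine Finset.sum_congr rfl fun k _ => ?_
    by_cases hk : I.get k = b <;> simp_all [lpar, insertAt, pow_add]

lemma comp_lam_dd (ha : par r a = 0) (hb : par r b = 1) (c : Fin m) (u : Cochain m) :
    comp r (lam [c] u) (dd a b) =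
      (-1 : ℂ) ^ par r c • lam [c] (comp r u (dd a b)) -
        if c = b then lam [a, a] u else 0 := by
  suffices (comp r).flip (dd a b) * lam [c] =
      (-1 : ℂ) ^ par r c • (lam [c] * (comp r).flip (dd a b)) -
        if c = b then lam [a, a] else 0 by
    have := LinearMap.congr_fun this u
    split_ifs at this ⊢ <;> simpa using this
  refine hom_ext_single fun I x => ?_
  have := basisComp_dd_cons ha hb c I x
  split_ifs at this ⊢ <;> simpa [dd, comp_single_single] using this

lemma wordDiff_nil (x : Fin m) (z : ℂ) : wordDiff r a b (single ([], x) z) = 0 := by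
  simp [wordDiff, twist_single, dd, comp_single_single, basisComp, -single_mul]

lemma wordDiff_lam_of_ne (ha : par r a = 0) (hb : par r b = 1) {c : Fin m} (hc : c ≠ b)
    (u : Cochain m) : wordDiff r a b (lam [c] u) = lam [c] (wordDiff r a b u) := by
  simp [wordDiff, twist_lam, comp_lam_dd ha hb, hc, smul_smul, ← mul_pow]

lemma wordDiff_lam_self (ha : par r a = 0) (hb : par r b = 1) (u : Cochain m) :
    wordDiff r a b (lam [b] u) = lam [b] (wordDiff r a b u) - lam [a] (lam [a] (twist r u)) := by
  simp only [wordDiff, LinearMap.neg_apply, coe_comp, Function.comp_apply, flip_apply, twist_lam,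
    hb, pow_one, neg_smul, one_smul, map_neg, comp_lam_dd ha hb, if_true, lam_cons_cons]
  abel

lemma wordDiff_twist (ha : par r a = 0) (hb : par r b = 1) (u : Cochain m) :
    wordDiff r a b (twist r u) = -twist r (wordDiff r a b u) := by
  suffices wordDiff r a b * twist r = -(twist r * wordDiff r a b) from LinearMap.congr_fun this u
  refine hom_ext_cons (fun x => by simp [twist_single, wordDiff_nil]) fun c u hu => ?_
  simp only [Module.End.mul_apply, LinearMap.neg_apply] at hu ⊢
  obtain rfl | hc := eq_or_ne c b
  · simp [twist_lam, wordDiff_lam_self ha hb, ha, hb, hu, twist_twist]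
  · simp [twist_lam, wordDiff_lam_of_ne ha hb hc, hu]

lemma wordDiff_theta (ha : par r a = 0) (hb : par r b = 1) (u : Cochain m) :
    wordDiff r a b (theta a b u) = theta a b (wordDiff r a b u) := by
  have hab := ne_of_par ha hb
  simp [theta_apply, wordDiff_lam_self ha hb, wordDiff_lam_of_ne ha hb hab, twist_lam, ha]

lemma wordDiff_rho (ha : par r a = 0) (hb : par r b = 1) (u : Cochain m) :
    wordDiff r a b (rho r [a] u) = rho r [a] (wordDiff r a b u) := by
  have hab := ne_of_par ha hb
  suffices wordDiff r a b * rho r [a] = rho r [a] * wordDiff r a b from LinearMap.congr_fun this u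
  refine hom_ext_cons (fun x => ?_) fun c u hu => ?_
  · have := wordDiff_lam_of_ne ha hb hab (single ([], x) 1)
    simpa [rho_single ha, wordDiff_nil] using this
  simp only [Module.End.mul_apply] at hu ⊢
  obtain rfl | hc := eq_or_ne c b
  · simp [rho_lam ha, wordDiff_lam_self ha hb, hu, twist_rho ha]
  · simp [rho_lam ha, wordDiff_lam_of_ne ha hb hc, hu]

lemma wordDiff_relabel (ha : par r a = 0) (hb : par r b = 1) (u : Cochain m) :
    wordDiff r a b (relabel a b u) = -relabel a b (wordDiff r a b u) := by
  suffices wordDiff r a b * relabel a b = -(relabel a b * wordDiff r a b) from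
    LinearMap.congr_fun this u
  refine hom_ext_cons (fun x => ?_) fun c u hu => ?_
  · by_cases hx : x = a <;> simp [hx, wordDiff_nil]
  simp only [Module.End.mul_apply, LinearMap.neg_apply] at hu ⊢
  obtain rfl | hc := eq_or_ne c b
  · simp only [relabel_lam, wordDiff_lam_self ha hb, hu, map_neg, map_sub, relabel_twist ha hb]
    abel
  · simp [relabel_lam, wordDiff_lam_of_ne ha hb hc, hu]

lemma basisComp_dd_left (ha : par r a = 0) (I : List (Fin m)) (x : Fin m) :
    basisComp r ([a, a], b) (I, x) =
      if x = a then single (a :: I, b) 1 + single (I ++ [a], b) 1 else 0 := by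
  by_cases hx : x = a
  · simp [basisComp, insertAt, lpar, ha, hx, Fin.sum_univ_succ, add_comm]
  · simp [basisComp, Ne.symm hx, hx, Fin.sum_univ_succ]

lemma Dop_eq_wordDiff_add_endsDiff (ha : par r a = 0) :
    Dop r a b = wordDiff r a b + endsDiff r a b := by
  suffices comp r (dd a b) = endsDiff r a b by rw [Dop, this, wordDiff, sub_eq_neg_add]
  refine hom_ext_single fun I x => ?_
  by_cases hx : x = a <;>
    simp [endsDiff, dd, comp_single_single, basisComp_dd_left ha, rho_single ha, hx]

end Operators

section Blocks

variable {r m : ℕ} {a b : Fin m}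

/-- The value on `φ^I_x` of the block-wise map `blockMap a b ε P Q Q'`. -/
noncomputable def blockWord (a b : Fin m) (ε : ℂ) (P Q Q' : Module.End ℂ (Cochain m)) (x : Fin m) :
    List (Fin m) → Cochain m
  | [] => ε • single ([], x) 1
  | [c] => if c = b then 0 else ε • single ([c], x) 1
  | c :: d :: I =>
    if c = b then 0
    else if c = a then
      if d = a then P (single (I, x) 1) + Q (blockWord a b ε P Q Q' x I)
      else if d = b then Q' (blockWord a b ε P Q Q' x I)
      else lam [a, d] (blockWord a b ε P Q Q' x I)
    else lam [c] (blockWord a b ε P Q Q' x (d :: I))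

/-- The linear maps defined by reading words from the left in blocks: a leading letter `c ≠ a, b`
or pair `a c` is copied, a leading `b` gives `0`, a leading `a a` is processed by `P` (acting on
the untouched rest of the word) and `Q` (acting on the processed rest) and a leading `a b` by
`Q'`. What remains in the end, the empty word or the word `a`, is multiplied by `ε`. -/
noncomputable def blockMap (a b : Fin m) (ε : ℂ) (P Q Q' : Module.End ℂ (Cochain m)) :
    Module.End ℂ (Cochain m) :=
  Finsupp.linearCombination ℂ fun p => blockWord a b ε P Q Q' p.2 p.1

lemma block_induction {α : Type*} {a : α} {motive : List α → Prop} (nil : motive [])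
    (a_nil : motive [a]) (cons : ∀ c I, c ≠ a → motive I → motive (c :: I))
    (a_cons_cons : ∀ c I, motive I → motive (a :: c :: I)) (I : List α) : motive I := by
  induction hn : I.length using Nat.strong_induction_on generalizing I with
  | _ n ih =>
  subst hn
  match I with
  | [] => exact nil
  | [c] =>
    by_cases hc : c = a
    · exact hc ▸ a_nil
    · exact cons c [] hc nil
  | c :: d :: I =>
    by_cases hc : c = a
    · exact hc ▸ a_cons_cons d I (ih _ (by simp) I rfl)
    · exact cons c _ hc (ih _ (by simp) (d :: I) rfl)

lemma hom_ext_block {V : Type*} [AddCommGroup V] [Module ℂ V] {f g : Cochain m →ₗ[ℂ] V}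
    (nil : ∀ x, f (single ([], x) 1) = g (single ([], x) 1))
    (a_nil : ∀ x, f (single ([a], x) 1) = g (single ([a], x) 1))
    (cons : ∀ c u, c ≠ a → c ≠ b → f u = g u → f (lam [c] u) = g (lam [c] u))
    (b_cons : ∀ u, f u = g u → f (lam [b] u) = g (lam [b] u))
    (aa_cons : ∀ u, f u = g u → f (lam [a] (lam [a] u)) = g (lam [a] (lam [a] u)))
    (ab_cons : ∀ u, f u = g u → f (lam [a] (lam [b] u)) = g (lam [a] (lam [b] u)))
    (ac_cons : ∀ c u, c ≠ a → c ≠ b → f u = g u →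
      f (lam [a] (lam [c] u)) = g (lam [a] (lam [c] u))) : f = g := by
  refine hom_ext_single fun I x => ?_
  induction I using block_induction (a := a) with
  | nil => exact nil x
  | a_nil => exact a_nil x
  | cons c I hca ih =>
    obtain rfl | hcb := eq_or_ne c b
    · simpa using b_cons _ ih
    · simpa using cons c _ hca hcb ih
  | a_cons_cons c I ih =>
    obtain rfl | hca := eq_or_ne c a
    · simpa using aa_cons _ ih
    obtain rfl | hcb := eq_or_ne c b
    · simpa using ab_cons _ ih
    · simpa using ac_cons c _ hca hcb ih

section

variable {ε : ℂ} {P Q Q' : Module.End ℂ (Cochain m)}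

lemma blockMap_single (I : List (Fin m)) (x : Fin m) (z : ℂ) :
    blockMap a b ε P Q Q' (single (I, x) z) = z • blockWord a b ε P Q Q' x I := by
  simp [blockMap]

lemma blockMap_nil (x : Fin m) (z : ℂ) :
    blockMap a b ε P Q Q' (single ([], x) z) = ε • single ([], x) z := by
  simp [blockMap_single, blockWord, mul_comm]

lemma blockMap_a_nil (hab : a ≠ b) (x : Fin m) (z : ℂ) :
    blockMap a b ε P Q Q' (single ([a], x) z) = ε • single ([a], x) z := by
  simp [blockMap_single, blockWord, hab, mul_comm]

lemma blockMap_cons {c : Fin m} (hca : c ≠ a) (hcb : c ≠ b) (u : Cochain m) :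
    blockMap a b ε P Q Q' (lam [c] u) = lam [c] (blockMap a b ε P Q Q' u) := by
  suffices blockMap a b ε P Q Q' * lam [c] = lam [c] * blockMap a b ε P Q Q' from
    LinearMap.congr_fun this u
  refine hom_ext_single fun I x => ?_
  cases I <;> simp [blockMap_single, blockWord, hca, hcb]

lemma blockMap_b_cons (u : Cochain m) :
    blockMap a b ε P Q Q' (lam [b] u) = 0 := by
  suffices blockMap a b ε P Q Q' * lam [b] = 0 from LinearMap.congr_fun this u
  refine hom_ext_single fun I x => ?_
  cases I <;> simp [blockMap_single, blockWord]

lemma blockMap_aa_cons (hab : a ≠ b) (u : Cochain m) :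
    blockMap a b ε P Q Q' (lam [a] (lam [a] u)) = P u + Q (blockMap a b ε P Q Q' u) := by
  suffices blockMap a b ε P Q Q' * lam [a] * lam [a] = P + Q * blockMap a b ε P Q Q' from
    LinearMap.congr_fun this u
  exact hom_ext_single fun I x => by simp [blockMap_single, blockWord, hab]

lemma blockMap_ab_cons (hab : a ≠ b) (u : Cochain m) :
    blockMap a b ε P Q Q' (lam [a] (lam [b] u)) = Q' (blockMap a b ε P Q Q' u) := by
  suffices blockMap a b ε P Q Q' * lam [a] * lam [b] = Q' * blockMap a b ε P Q Q' from
    LinearMap.congr_fun this u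
  exact hom_ext_single fun I x => by simp [blockMap_single, blockWord, hab, hab.symm]

lemma blockMap_ac_cons (hab : a ≠ b) {c : Fin m} (hca : c ≠ a) (hcb : c ≠ b) (u : Cochain m) :
    blockMap a b ε P Q Q' (lam [a] (lam [c] u)) = lam [a] (lam [c] (blockMap a b ε P Q Q' u)) := by
  suffices blockMap a b ε P Q Q' * lam [a] * lam [c] = lam [a] * lam [c] * blockMap a b ε P Q Q'
    from LinearMap.congr_fun this u
  exact hom_ext_single fun I x => by simp [blockMap_single, blockWord, hab, hca, hcb]

end

/-- The projection of the complex `(C, ∂)` onto its model, which has the words without `b` as a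
basis; here `∂ = wordDiff`. -/
noncomputable def wordProj (a b : Fin m) : Module.End ℂ (Cochain m) :=
  blockMap a b 1 0 0 (lam [a, a])

/-- The inclusion of the model into `(C, ∂)`, replacing the blocks `a a` by `a b - b a`. -/
noncomputable def wordIncl (a b : Fin m) : Module.End ℂ (Cochain m) :=
  blockMap a b 1 0 (theta a b) 0

/-- The contracting homotopy of `(C, ∂)` onto its model. -/
noncomputable def wordHtpy (r : ℕ) (a b : Fin m) : Module.End ℂ (Cochain m) :=
  blockMap a b 0 (-(lam [b] * twist r)) 0 (theta a b)

lemma wordDiff_a_nil (ha : par r a = 0) (hb : par r b = 1) (x : Fin m) :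
    wordDiff r a b (single ([a], x) 1) = 0 := by
  simpa [wordDiff_nil] using wordDiff_lam_of_ne ha hb (ne_of_par ha hb) (single ([], x) 1)

lemma wordDiff_wordHtpy (ha : par r a = 0) (hb : par r b = 1) :
    wordDiff r a b * wordHtpy r a b + wordHtpy r a b * wordDiff r a b =
      1 - wordIncl a b * wordProj a b := by
  have hab := ne_of_par ha hb
  have lam_a := wordDiff_lam_of_ne ha hb hab
  have lam_b := wordDiff_lam_self ha hb
  unfold wordHtpy wordIncl wordProj
  refine hom_ext_block (a := a) (b := b) (fun x => ?_) (fun x => ?_) (fun c u hca hcb hu => ?_)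
    (fun u _ => ?_) (fun u _ => ?_) (fun u hu => ?_) (fun c u hca hcb hu => ?_)
  · simp [blockMap_nil, wordDiff_nil]
  · simp [blockMap_a_nil hab, wordDiff_a_nil ha hb]
  · simpa [wordDiff_lam_of_ne ha hb hcb, blockMap_cons hca hcb] using congrArg (lam [c]) hu
  · simp [lam_b, blockMap_b_cons, blockMap_aa_cons hab, twist_twist]
  · simp [lam_a, lam_b, blockMap_aa_cons hab, wordDiff_twist ha hb, twist_twist]
  · have hθ := congrArg (theta a b) hu
    simp only [LinearMap.add_apply, Module.End.mul_apply, LinearMap.sub_apply, map_add, map_sub,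
      Module.End.one_apply] at hθ
    simp only [LinearMap.add_apply, Module.End.mul_apply, LinearMap.sub_apply, Module.End.one_apply,
      blockMap_ab_cons hab, blockMap_aa_cons hab, wordDiff_theta ha hb, lam_a, lam_b, lam_cons_cons,
      map_sub, LinearMap.neg_apply, LinearMap.zero_apply, add_zero, zero_add, sub_neg_eq_add]
    rw [← add_assoc, hθ, theta_apply a b u, twist_lam, ha, pow_zero, one_smul, twist_twist]
    abel
  · simpa [lam_a, wordDiff_lam_of_ne ha hb hcb, blockMap_ac_cons hab hca hcb] using
      congrArg (lam [a] * lam [c]) hu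

lemma wordProj_wordDiff (ha : par r a = 0) (hb : par r b = 1) :
    wordProj a b * wordDiff r a b = 0 := by
  have hab := ne_of_par ha hb
  have lam_a := wordDiff_lam_of_ne ha hb hab
  have lam_b := wordDiff_lam_self ha hb
  unfold wordProj
  refine hom_ext_block (a := a) (b := b) (fun x => ?_) (fun x => ?_) (fun c u hca hcb hu => ?_)
    (fun u _ => ?_) (fun u _ => ?_) (fun u hu => ?_) (fun c u hca hcb hu => ?_)
  · simp [wordDiff_nil]
  · simp [wordDiff_a_nil ha hb]
  · simp_all [wordDiff_lam_of_ne ha hb hcb, blockMap_cons hca hcb]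
  · simp [lam_b, blockMap_b_cons, blockMap_aa_cons hab]
  · simp [lam_a, blockMap_aa_cons hab]
  · simp_all [blockMap_aa_cons hab, blockMap_ab_cons hab]
  · simp_all [wordDiff_lam_of_ne ha hb hcb, blockMap_ac_cons hab hca hcb]

lemma mul_blockMap_eq_zero {T P Q Q' : Module.End ℂ (Cochain m)} {ε : ℂ} (hab : a ≠ b)
    (nil : ∀ x, T (ε • single ([], x) 1) = 0) (a_nil : ∀ x, T (ε • single ([a], x) 1) = 0)
    (cons : ∀ {c}, c ≠ a → c ≠ b → ∀ u, T (lam [c] u) = lam [c] (T u))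
    (ac_cons : ∀ {c}, c ≠ a → c ≠ b → ∀ u, T (lam [a] (lam [c] u)) = lam [a] (lam [c] (T u)))
    (hP : ∀ u, T (P u) = 0) (hQ : ∀ u, T u = 0 → T (Q u) = 0)
    (hQ' : ∀ u, T u = 0 → T (Q' u) = 0) : T * blockMap a b ε P Q Q' = 0 := by
  refine hom_ext_block (a := a) (b := b) (fun x => ?_) (fun x => ?_) (fun c u hca hcb hu => ?_)
    (fun u _ => ?_) (fun u hu => ?_) (fun u hu => ?_) (fun c u hca hcb hu => ?_)
  · rw [Module.End.mul_apply, blockMap_nil, nil, LinearMap.zero_apply]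
  · rw [Module.End.mul_apply, blockMap_a_nil hab, a_nil, LinearMap.zero_apply]
  · simp_all [blockMap_cons]
  · simp [blockMap_b_cons]
  · simp_all [blockMap_aa_cons]
  · simp_all [blockMap_ab_cons]
  · simp_all [blockMap_ac_cons]

lemma blockMap_theta (hab : a ≠ b) {ε : ℂ} {P Q Q' : Module.End ℂ (Cochain m)} (u : Cochain m) :
    blockMap a b ε P Q Q' (theta a b u) = Q' (blockMap a b ε P Q Q' u) := by
  simp [theta_apply, blockMap_ab_cons hab, blockMap_b_cons]

lemma wordDiff_wordIncl (ha : par r a = 0) (hb : par r b = 1) :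
    wordDiff r a b * wordIncl a b = 0 := by
  have hab := ne_of_par ha hb
  refine mul_blockMap_eq_zero hab ?_ ?_ ?_ ?_ ?_ ?_ ?_
  · simp [wordDiff_nil]
  · simp [wordDiff_a_nil ha hb]
  · exact fun _ hcb => wordDiff_lam_of_ne ha hb hcb
  · exact fun _ hcb => by simp [wordDiff_lam_of_ne ha hb hab, wordDiff_lam_of_ne ha hb hcb]
  · simp
  · exact fun u hu => by simp [wordDiff_theta ha hb, hu]
  · simp

lemma wordHtpy_wordHtpy (hab : a ≠ b) : wordHtpy r a b * wordHtpy r a b = 0 := by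
  refine mul_blockMap_eq_zero hab ?_ ?_ blockMap_cons (blockMap_ac_cons hab) ?_ ?_ ?_
  · simp
  · simp
  · simp [wordHtpy, blockMap_b_cons]
  · simp
  · exact fun u hu => (blockMap_theta hab u).trans (by rw [← wordHtpy, hu, map_zero])

lemma wordHtpy_wordIncl (hab : a ≠ b) : wordHtpy r a b * wordIncl a b = 0 := by
  refine mul_blockMap_eq_zero hab ?_ ?_ blockMap_cons (blockMap_ac_cons hab) ?_ ?_ ?_
  · simp [wordHtpy, blockMap_nil]
  · simp [wordHtpy, blockMap_a_nil hab]
  · simp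
  · exact fun u hu => (blockMap_theta hab u).trans (by rw [← wordHtpy, hu, map_zero])
  · simp

lemma wordProj_wordHtpy (hab : a ≠ b) : wordProj a b * wordHtpy r a b = 0 := by
  refine mul_blockMap_eq_zero hab ?_ ?_ blockMap_cons (blockMap_ac_cons hab) ?_ ?_ ?_
  · simp
  · simp
  · simp [wordProj, blockMap_b_cons]
  · simp
  · exact fun u hu => (blockMap_theta hab u).trans (by rw [← wordProj, hu, map_zero])

lemma relabel_theta (u : Cochain m) :
    relabel a b (theta a b u) = theta a b (relabel a b u) := by
  simp [theta_apply, relabel_lam]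

lemma relabel_blockMap {P Q Q' : Module.End ℂ (Cochain m)} {ε σ : ℂ} (hab : a ≠ b)
    (hε : σ * ε = ε) (hP : ∀ u, relabel a b (P u) = σ • P (relabel a b u))
    (hQ : ∀ u, relabel a b (Q u) = Q (relabel a b u))
    (hQ' : ∀ u, relabel a b (Q' u) = Q' (relabel a b u)) (u : Cochain m) :
    relabel a b (blockMap a b ε P Q Q' u) = σ • blockMap a b ε P Q Q' (relabel a b u) := by
  suffices relabel a b * blockMap a b ε P Q Q' = σ • (blockMap a b ε P Q Q' * relabel a b) from
    LinearMap.congr_fun this u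
  refine hom_ext_block (a := a) (b := b) (fun x => ?_) (fun x => ?_) (fun c u hca hcb hu => ?_)
    (fun u _ => ?_) (fun u hu => ?_) (fun u hu => ?_) (fun c u hca hcb hu => ?_)
  · by_cases hx : x = a <;> simp [blockMap_nil, hx, hε]
  · by_cases hx : x = a <;> simp [blockMap_a_nil hab, hx, hε]
  · simp_all [relabel_lam, blockMap_cons]
  · simp [relabel_lam, blockMap_b_cons]
  · simp_all [relabel_lam, blockMap_aa_cons]
  · simp_all [relabel_lam, blockMap_ab_cons]
  · simp_all [relabel_lam, blockMap_ac_cons]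

lemma relabel_wordIncl (hab : a ≠ b) (u : Cochain m) :
    relabel a b (wordIncl a b u) = wordIncl a b (relabel a b u) := by
  simpa only [one_smul, wordIncl] using
    relabel_blockMap (σ := 1) hab (one_mul 1) (by simp) relabel_theta (by simp) u

lemma relabel_wordHtpy (ha : par r a = 0) (hb : par r b = 1) (u : Cochain m) :
    relabel a b (wordHtpy r a b u) = -wordHtpy r a b (relabel a b u) := by
  simpa only [neg_smul, one_smul, wordHtpy] using
    relabel_blockMap (σ := -1) (ne_of_par ha hb) (mul_zero _)
    (by simp [relabel_lam, relabel_twist ha hb]) (by simp) relabel_theta u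

end Blocks

section Model

variable {r m : ℕ} {a b : Fin m}

/-- The words of length `n` without the letter `b`. -/
def wordsAvoiding (b : Fin m) : ℕ → Finset (List (Fin m))
  | 0 => {[]}
  | n + 1 => Finset.image₂ List.cons (Finset.univ.erase b) (wordsAvoiding b n)

/-- The degree `n` part of the model of `(C, ∂)`: the span of the `φ^I_x` such that `b` does not
occur in `I`. -/
def Model (b : Fin m) (n : ℕ) : Submodule ℂ (Cochain m) :=
  Finsupp.supported ℂ ℂ ↑(wordsAvoiding b n ×ˢ (Finset.univ : Finset (Fin m)))

lemma mem_wordsAvoiding {n : ℕ} {I : List (Fin m)} :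
    I ∈ wordsAvoiding b n ↔ I.length = n ∧ b ∉ I := by
  induction n generalizing I with
  | zero => cases I <;> simp [wordsAvoiding]
  | succ n ih => cases I <;> simp [wordsAvoiding, ih, and_left_comm, eq_comm]

lemma card_wordsAvoiding (b : Fin m) (n : ℕ) : (wordsAvoiding b n).card = (m - 1) ^ n := by
  induction n with
  | zero => simp [wordsAvoiding]
  | succ n ih =>
    rw [wordsAvoiding, Finset.card_image₂ fun _ _ _ _ => List.cons.inj, ih,
      Finset.card_erase_of_mem (Finset.mem_univ b), Finset.card_univ, Fintype.card_fin, pow_succ']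

lemma finrank_supported {K ι : Type*} [Ring K] [StrongRankCondition K] (s : Finset ι) :
    Module.finrank K (Finsupp.supported K K (s : Set ι)) = s.card := by
  rw [(Finsupp.supportedEquivFinsupp (s : Set ι)).finrank_eq, Module.finrank_finsupp_self]
  simp

lemma finrank_Model (b : Fin m) (n : ℕ) : Module.finrank ℂ (Model b n) = (m - 1) ^ n * m := by
  rw [Model, finrank_supported, Finset.card_product, card_wordsAvoiding, Finset.card_univ,
    Fintype.card_fin]

instance (b : Fin m) (n : ℕ) : FiniteDimensional ℂ (Model b n) :=
  Module.Finite.equiv (Finsupp.supportedEquivFinsupp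
    (↑(wordsAvoiding b n ×ˢ (Finset.univ : Finset (Fin m))) : Set (List (Fin m) × Fin m))).symm

lemma Cn_eq_supported (n : ℕ) : Cn m n = Finsupp.supported ℂ ℂ {p | p.1.length = n} := by
  rw [Finsupp.supported_eq_span_single, Cn]
  congr 1
  aesop

lemma map_supported_le {K α V : Type*} [Semiring K] [AddCommMonoid V] [Module K V]
    {f : (α →₀ K) →ₗ[K] V} {s : Set α} {U : Submodule K V}
    (hf : ∀ p ∈ s, f (single p 1) ∈ U) : (Finsupp.supported K K s).map f ≤ U := by
  rw [Finsupp.supported_eq_span_single, Submodule.map_span_le]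
  rintro _ ⟨p, hp, rfl⟩
  exact hf p hp

lemma map_Cn_le {f : Module.End ℂ (Cochain m)} {n : ℕ} {U : Submodule ℂ (Cochain m)}
    (hf : ∀ I : List (Fin m), I.length = n → ∀ x, f (single (I, x) 1) ∈ U) :
    (Cn m n).map f ≤ U := by
  rw [Cn_eq_supported]
  exact map_supported_le fun p hp => hf p.1 hp p.2

lemma map_Model_le {f : Module.End ℂ (Cochain m)} {n : ℕ} {U : Submodule ℂ (Cochain m)}
    (hf : ∀ I : List (Fin m), I.length = n → b ∉ I → ∀ x, f (single (I, x) 1) ∈ U) :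
    (Model b n).map f ≤ U := by
  refine map_supported_le fun p hp => ?_
  have hp := mem_wordsAvoiding.1 (Finset.mem_product.1 hp).1
  exact hf p.1 hp.1 hp.2 p.2

lemma single_mem_Cn (I : List (Fin m)) (x : Fin m) (z : ℂ) : single (I, x) z ∈ Cn m I.length := by
  rw [Cn_eq_supported]
  exact Finsupp.single_mem_supported ℂ z rfl

lemma single_mem_Model {I : List (Fin m)} (hI : b ∉ I) (x : Fin m) (z : ℂ) :
    single (I, x) z ∈ Model b I.length :=
  Finsupp.single_mem_supported ℂ z (by simp [mem_wordsAvoiding, hI])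

lemma Model_le_Cn (b : Fin m) (n : ℕ) : Model b n ≤ Cn m n := by
  rw [Cn_eq_supported]
  exact Finsupp.supported_mono fun p hp => (mem_wordsAvoiding.1 (Finset.mem_product.1 hp).1).1

lemma map_lam_Cn_le (J : List (Fin m)) (n : ℕ) : (Cn m n).map (lam J) ≤ Cn m (n + J.length) := by
  refine map_Cn_le fun I hI x => ?_
  have := single_mem_Cn (J ++ I) x 1
  rwa [List.length_append, hI, add_comm, ← lam_single] at this

lemma map_lam_Model_le {J : List (Fin m)} (hJ : b ∉ J) (n : ℕ) :
    (Model b n).map (lam J) ≤ Model b (n + J.length) := by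
  refine map_Model_le fun I hI hbI x => ?_
  have := single_mem_Model (b := b) (I := J ++ I) (by simp [hJ, hbI]) x 1
  rwa [List.length_append, hI, add_comm, ← lam_single] at this

lemma map_twist_Cn_le (n : ℕ) : (Cn m n).map (twist r) ≤ Cn m n :=
  map_Cn_le fun I hI x => by rw [twist_single, ← hI]; exact single_mem_Cn I x _

lemma map_theta_Cn_le (n : ℕ) : (Cn m n).map (theta a b) ≤ Cn m (n + 2) := by
  rintro _ ⟨u, hu, rfl⟩
  exact sub_mem (map_lam_Cn_le [a, b] n (mem_map_of_mem hu))
    (map_lam_Cn_le [b, a] n (mem_map_of_mem hu))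

lemma map_endsDiff_Cn_le (ha : par r a = 0) (n : ℕ) :
    (Cn m n).map (endsDiff r a b) ≤ Cn m (n + 1) := by
  refine map_Cn_le fun I hI x => ?_
  by_cases hx : x = a
  · have hl := single_mem_Cn (a :: I) b 1
    have hr := single_mem_Cn (I ++ [a]) b 1
    simp only [List.length_cons, List.length_append, List.length_nil, hI] at hl hr
    simpa [endsDiff, hx, rho_single ha] using add_mem hl hr
  · simp [endsDiff, hx]

lemma blockWord_mem {G : ℕ → Submodule ℂ (Cochain m)} {ε : ℂ} {P Q Q' : Module.End ℂ (Cochain m)}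
    {x : Fin m} (hab : a ≠ b) (nil : ε • single ([], x) 1 ∈ G 0)
    (hlam : ∀ c ≠ b, ∀ n, (G n).map (lam [c]) ≤ G (n + 1))
    (hP : ∀ I, P (single (I, x) 1) ∈ G (I.length + 2)) (hQ : ∀ n, (G n).map Q ≤ G (n + 2))
    (hQ' : ∀ n, (G n).map Q' ≤ G (n + 2)) (I : List (Fin m)) :
    blockWord a b ε P Q Q' x I ∈ G I.length := by
  have lam_mem {c n u} (hc : c ≠ b) (hu : u ∈ G n) : lam [c] u ∈ G (n + 1) :=
    hlam c hc n (mem_map_of_mem hu)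
  induction I using block_induction (a := a) with
  | nil => exact nil
  | a_nil => simpa [blockWord, hab] using lam_mem hab nil
  | cons c I hca ih =>
    obtain rfl | hcb := eq_or_ne c b
    · cases I <;> simp [blockWord]
    · cases I <;> simpa [blockWord, hca, hcb] using lam_mem hcb ih
  | a_cons_cons c I ih =>
    obtain rfl | hca := eq_or_ne c a
    · simpa [blockWord, hab] using add_mem (hP I) (hQ _ (mem_map_of_mem ih))
    obtain rfl | hcb := eq_or_ne c b
    · simpa [blockWord, hab, hca] using hQ' _ (mem_map_of_mem ih)
    · simpa [blockWord, hab, hca, hcb] using lam_mem hab (lam_mem hcb ih)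

lemma map_wordProj_Cn_le (hab : a ≠ b) (n : ℕ) : (Cn m n).map (wordProj a b) ≤ Model b n := by
  refine map_Cn_le fun I hI x => ?_
  rw [wordProj, blockMap_single, one_smul, ← hI]
  refine blockWord_mem hab ?_ (fun c hc => map_lam_Model_le (by simpa using hc.symm)) ?_ ?_
    (map_lam_Model_le (J := [a, a]) (by simpa using hab.symm)) I
  · simpa using single_mem_Model (List.not_mem_nil (a := b)) x 1
  · simp
  · simp

lemma map_wordIncl_Cn_le (hab : a ≠ b) (n : ℕ) : (Cn m n).map (wordIncl a b) ≤ Cn m n := by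
  refine map_Cn_le fun I hI x => ?_
  rw [wordIncl, blockMap_single, one_smul, ← hI]
  refine blockWord_mem hab ?_ (fun c _ => map_lam_Cn_le [c]) ?_ map_theta_Cn_le ?_ I
  · simpa using single_mem_Cn [] x 1
  · simp
  · simp

lemma map_wordHtpy_Cn_le (hab : a ≠ b) (n : ℕ) :
    (Cn m n).map (wordHtpy r a b) ≤ lower (Cn m) n := by
  refine map_Cn_le fun I hI x => ?_
  rw [wordHtpy, blockMap_single, one_smul, ← hI]
  refine blockWord_mem (G := lower (Cn m)) hab ?_
    (fun c _ => map_lower_le_add (map_lam_Cn_le [c])) (fun J => ?_) ?_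
    (map_lower_le_add map_theta_Cn_le) I
  · simp
  · have hJ : twist r (single (J, x) 1) ∈ Cn m J.length :=
      map_twist_Cn_le _ (mem_map_of_mem (single_mem_Cn J x 1))
    have hbJ : lam [b] (twist r (single (J, x) 1)) ∈ Cn m (J.length + 1) :=
      map_lam_Cn_le [b] _ (mem_map_of_mem hJ)
    simpa only [LinearMap.neg_apply, Module.End.mul_apply, lower] using neg_mem hbJ
  · simp

lemma avoiding_induction {α : Type*} {a b : α} {motive : List α → Prop} (nil : motive [])
    (a_nil : motive [a])
    (cons : ∀ c I, c ≠ a → c ≠ b → b ∉ I → motive I → motive (c :: I))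
    (aa_cons : ∀ I, motive I → motive (a :: a :: I))
    (ac_cons : ∀ c I, c ≠ a → c ≠ b → motive I → motive (a :: c :: I)) {I : List α}
    (hI : b ∉ I) : motive I := by
  induction I using block_induction (a := a) with
  | nil => exact nil
  | a_nil => exact a_nil
  | cons c I hca ih =>
    simp only [List.mem_cons, not_or] at hI
    exact cons c I hca (Ne.symm hI.1) hI.2 (ih hI.2)
  | a_cons_cons c I ih =>
    simp only [List.mem_cons, not_or] at hI
    obtain rfl | hca := eq_or_ne c a
    · exact aa_cons I (ih hI.2.2)
    · exact ac_cons c I hca (Ne.symm hI.2.1) (ih hI.2.2)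

lemma wordIncl_nil (x : Fin m) : wordIncl a b (single ([], x) 1) = single ([], x) 1 :=
  (blockMap_nil x 1).trans (one_smul _ _)

lemma wordIncl_a_nil (hab : a ≠ b) (x : Fin m) :
    wordIncl a b (single ([a], x) 1) = single ([a], x) 1 :=
  (blockMap_a_nil hab x 1).trans (one_smul _ _)

lemma wordIncl_cons {c : Fin m} (hca : c ≠ a) (hcb : c ≠ b) (I : List (Fin m)) (x : Fin m) :
    wordIncl a b (single (c :: I, x) 1) = lam [c] (wordIncl a b (single (I, x) 1)) := by
  simpa [wordIncl] using
    blockMap_cons (ε := 1) (P := 0) (Q := theta a b) (Q' := 0) hca hcb (single (I, x) 1)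

lemma wordIncl_aa_cons (hab : a ≠ b) (I : List (Fin m)) (x : Fin m) :
    wordIncl a b (single (a :: a :: I, x) 1) = theta a b (wordIncl a b (single (I, x) 1)) := by
  simpa [wordIncl] using
    blockMap_aa_cons (ε := 1) (P := 0) (Q := theta a b) (Q' := 0) hab (single (I, x) 1)

lemma wordIncl_ac_cons (hab : a ≠ b) {c : Fin m} (hca : c ≠ a) (hcb : c ≠ b) (I : List (Fin m))
    (x : Fin m) : wordIncl a b (single (a :: c :: I, x) 1) =
      lam [a] (lam [c] (wordIncl a b (single (I, x) 1))) := by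
  simpa [wordIncl] using
    blockMap_ac_cons (ε := 1) (P := 0) (Q := theta a b) (Q' := 0) hab hca hcb (single (I, x) 1)

lemma wordProj_wordIncl_single (hab : a ≠ b) {I : List (Fin m)} (hI : b ∉ I) (x : Fin m) :
    wordProj a b (wordIncl a b (single (I, x) 1)) = single (I, x) 1 := by
  refine avoiding_induction (a := a) (b := b)
    (motive := fun I => wordProj a b (wordIncl a b (single (I, x) 1)) = single (I, x) 1)
    ?_ ?_ (fun c I hca hcb _ ih => ?_) (fun I ih => ?_) (fun c I hca hcb ih => ?_) hI
  · simp [wordIncl_nil, wordProj, blockMap_nil]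
  · simp [wordIncl_a_nil hab, wordProj, blockMap_a_nil hab]
  · rw [wordIncl_cons hca hcb, wordProj, blockMap_cons hca hcb, ← wordProj, ih, lam_single]
    rfl
  · rw [wordIncl_aa_cons hab, wordProj, blockMap_theta hab, ← wordProj, ih, lam_single]
    rfl
  · rw [wordIncl_ac_cons hab hca hcb, wordProj, blockMap_ac_cons hab hca hcb, ← wordProj, ih,
      lam_single, lam_single]
    rfl

lemma wordProj_wordIncl (hab : a ≠ b) {n : ℕ} {w : Cochain m} (hw : w ∈ Model b n) :
    wordProj a b (wordIncl a b w) = w := by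
  suffices (Model b n).map (wordProj a b * wordIncl a b - 1) ≤ ⊥ from
    sub_eq_zero.1 (this (mem_map_of_mem hw))
  exact map_Model_le fun I _ hbI x => sub_eq_zero.2 (wordProj_wordIncl_single hab hbI x)

end Model

section Retract

variable {r m : ℕ} {a b : Fin m}

/-- The differential induced on the model by the coboundary operator. -/
noncomputable def modelDiff (r : ℕ) (a b : Fin m) : Module.End ℂ (Cochain m) :=
  wordProj a b * endsDiff r a b * wordIncl a b

lemma relabel_mul_endsDiff (ha : par r a = 0) (hab : a ≠ b) :
    relabel a b * endsDiff r a b = 0 := by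
  refine LinearMap.ext fun u => ?_
  simp [endsDiff, relabel_lam, relabel_rho ha, relabel_relabel hab.symm]

lemma wordDiff_mul_endsDiff (ha : par r a = 0) (hb : par r b = 1) :
    wordDiff r a b * endsDiff r a b = -(endsDiff r a b * wordDiff r a b) := by
  refine LinearMap.ext fun u => ?_
  simp [endsDiff, wordDiff_lam_of_ne ha hb (ne_of_par ha hb), wordDiff_rho ha hb,
    wordDiff_relabel ha hb, add_comm]

lemma endsDiff_mul_endsDiff (ha : par r a = 0) (hab : a ≠ b) :
    endsDiff r a b * endsDiff r a b = 0 := by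
  nth_rw 1 [endsDiff]
  rw [mul_assoc, relabel_mul_endsDiff ha hab, mul_zero]

lemma endsDiff_wordHtpy_endsDiff (ha : par r a = 0) (hb : par r b = 1) :
    endsDiff r a b * wordHtpy r a b * endsDiff r a b = 0 := by
  refine LinearMap.ext fun u => ?_
  have hu : relabel a b (endsDiff r a b u) = 0 :=
    LinearMap.congr_fun (relabel_mul_endsDiff ha (ne_of_par ha hb)) u
  change (lam [a] + rho r [a]) (relabel a b (wordHtpy r a b (endsDiff r a b u))) = 0
  rw [relabel_wordHtpy ha hb, hu, map_zero, neg_zero, map_zero]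

lemma isHomotopyRetract_wordDiff (ha : par r a = 0) (hb : par r b = 1) :
    IsHomotopyRetract (wordDiff r a b) 0 (wordIncl a b) (wordProj a b) (wordHtpy r a b) where
  incl_comm := (wordDiff_wordIncl ha hb).trans (mul_zero _).symm
  proj_comm := (wordProj_wordDiff ha hb).trans (zero_mul _).symm
  homotopy := wordDiff_wordHtpy ha hb

lemma modelDiff_mul_modelDiff (ha : par r a = 0) (hb : par r b = 1) :
    modelDiff r a b * modelDiff r a b = 0 := by
  have := (isHomotopyRetract_wordDiff ha hb).perturbation_sandwich (wordDiff_mul_endsDiff ha hb)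
    (endsDiff_mul_endsDiff ha (ne_of_par ha hb)) (endsDiff_wordHtpy_endsDiff ha hb)
  linear_combination (norm := (unfold modelDiff; noncomm_ring)) wordProj a b * this * wordIncl a b

lemma map_modelDiff_Model_le (ha : par r a = 0) (hab : a ≠ b) (n : ℕ) :
    (Model b n).map (modelDiff r a b) ≤ Model b (n + 1) := by
  rintro _ ⟨w, hw, rfl⟩
  exact map_wordProj_Cn_le hab _ (mem_map_of_mem (map_endsDiff_Cn_le ha n (mem_map_of_mem
    (map_wordIncl_Cn_le hab n (mem_map_of_mem (Model_le_Cn b n hw))))))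

theorem finrank_cohomology_Dop (ha : par r a = 0) (hb : par r b = 1) (n : ℕ) :
    Module.finrank ℂ (Cohomology (Dop r a b) (Cn m) n) =
      Module.finrank ℂ (Cohomology (modelDiff r a b) (Model b) n) := by
  have hab := ne_of_par ha hb
  have H := (isHomotopyRetract_wordDiff ha hb).perturb (wordDiff_mul_endsDiff ha hb)
    (endsDiff_mul_endsDiff ha hab) (endsDiff_wordHtpy_endsDiff ha hb)
  rw [← Dop_eq_wordDiff_add_endsDiff ha] at H
  have incl_mem {n u} (hu : u ∈ Cn m n) := map_wordIncl_Cn_le hab n (mem_map_of_mem hu)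
  have proj_mem {n u} (hu : u ∈ Cn m n) := map_wordProj_Cn_le hab n (mem_map_of_mem hu)
  have ends_mem {n u} (hu : u ∈ Cn m n) := map_endsDiff_Cn_le (b := b) ha n (mem_map_of_mem hu)
  have htpy_mem {n u} (hu : u ∈ Cn m n) := map_wordHtpy_Cn_le (r := r) hab n (mem_map_of_mem hu)
  have ends_lower : ∀ n, (lower (Cn m) n).map (endsDiff r a b) ≤ Cn m n
    | 0 => (Submodule.map_bot _).trans_le bot_le
    | n + 1 => map_endsDiff_Cn_le ha n
  refine H.finrank_cohomology_eq ?_ ?_ ?_ ?_ n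
  · rintro n _ ⟨w, hw, rfl⟩
    have hι := incl_mem (Model_le_Cn b n hw)
    exact sub_mem hι (htpy_mem (ends_mem hι))
  · rintro n _ ⟨u, hu, rfl⟩
    exact sub_mem (proj_mem hu) (proj_mem (ends_lower n (mem_map_of_mem (htpy_mem hu))))
  · rintro n _ ⟨u, hu, rfl⟩
    exact sub_mem (htpy_mem hu) (htpy_mem (ends_lower n (mem_map_of_mem (htpy_mem hu))))
  · intro n w hw
    have hpι := IsHomotopyRetract.perturbed_proj_mul_incl (endsDiff r a b)
      (wordProj_wordHtpy (r := r) hab) (wordHtpy_wordIncl hab) (wordHtpy_wordHtpy hab)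
    exact (LinearMap.congr_fun hpι w).trans (wordProj_wordIncl hab hw)

end Retract

section Runs

variable {α : Type*} [DecidableEq α] {a : α}

/-- The number of letters `a` at the beginning of a word. -/
def leadRun (a : α) (I : List α) : ℕ := (I.takeWhile (· = a)).length

lemma leadRun_nil : leadRun a [] = 0 := rfl

lemma leadRun_cons_self (I : List α) : leadRun a (a :: I) = leadRun a I + 1 := by
  simp [leadRun]

lemma leadRun_cons_of_ne {c : α} (hc : c ≠ a) (I : List α) : leadRun a (c :: I) = 0 := by
  simp [leadRun, hc]

lemma exists_cons_of_not_even_leadRun {I : List α} (hI : ¬Even (leadRun a I)) :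
    ∃ J, I = a :: J := by
  cases I with
  | nil => simp [leadRun_nil] at hI
  | cons c J =>
    by_cases hc : c = a
    · exact ⟨J, hc ▸ rfl⟩
    · simp [leadRun_cons_of_ne hc] at hI

lemma leadRun_append (I J : List α) :
    leadRun a (I ++ J) = leadRun a I + if ∀ c ∈ I, c = a then leadRun a J else 0 := by
  induction I with
  | nil => simp [leadRun_nil]
  | cons c I ih =>
    by_cases hc : c = a
    · subst hc
      simp [leadRun_cons_self, ih, Nat.add_right_comm]
    · simp [leadRun_cons_of_ne hc, hc]

lemma leadRun_append_cons_of_ne {c : α} (hc : c ≠ a) (I J : List α) :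
    leadRun a (I ++ c :: J) = leadRun a I := by
  simp [leadRun_append, leadRun_cons_of_ne hc]

lemma even_leadRun_append_pair (I : List α) :
    Even (leadRun a (I ++ [a, a])) ↔ Even (leadRun a I) := by
  rw [leadRun_append, leadRun_cons_self, leadRun_cons_self, leadRun_nil]
  split_ifs <;> simp [Nat.even_add]

lemma leadRun_append_of_ne_replicate {I : List α} (hI : I ≠ List.replicate I.length a)
    (J : List α) : leadRun a (I ++ J) = leadRun a I := by
  rw [leadRun_append, if_neg fun h => hI (List.eq_replicate_of_mem h), add_zero]

lemma leadRun_replicate (n : ℕ) : leadRun a (List.replicate n a) = n := by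
  simp [leadRun]

lemma append_singleton_ne_cons {I J : List α} (hI : Even (leadRun a I))
    (hJ : Even (leadRun a J)) (hpure : I ≠ List.replicate I.length a) : I ++ [a] ≠ a :: J := by
  intro h
  have hrun := leadRun_append_of_ne_replicate hpure [a]
  rw [h, leadRun_cons_self] at hrun
  exact Nat.even_add_one.1 (hrun ▸ hI) hJ

end Runs

section Rank

variable {r m : ℕ} {a b : Fin m}

lemma rho_theta (ha : par r a = 0) (u : Cochain m) :
    rho r [a] (theta a b u) = theta a b (rho r [a] u) := by
  simp [theta_apply, rho_lam ha]

lemma wordProj_lam_wordIncl (hab : a ≠ b) {I : List (Fin m)} (hI : b ∉ I) (x : Fin m) :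
    wordProj a b (lam [a] (wordIncl a b (single (I, x) 1))) =
      if Even (leadRun a I) then single (a :: I, x) ((-1) ^ (leadRun a I / 2)) else 0 := by
  refine avoiding_induction (a := a) (b := b)
    (motive := fun I => wordProj a b (lam [a] (wordIncl a b (single (I, x) 1))) =
      if Even (leadRun a I) then single (a :: I, x) ((-1) ^ (leadRun a I / 2)) else 0)
    ?_ ?_ (fun c I hca hcb hI _ => ?_) (fun I ih => ?_) (fun c I hca hcb _ => ?_) hI
  · simp [wordIncl_nil, wordProj, blockMap_a_nil hab, leadRun_nil]
  · have haa : single ([a, a], x) (1 : ℂ) = lam [a] (lam [a] (single ([], x) 1)) := by simp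
    rw [wordIncl_a_nil hab, lam_single, List.singleton_append, haa, wordProj,
      blockMap_aa_cons hab]
    simp [leadRun_cons_self, leadRun_nil]
  · rw [wordIncl_cons hca hcb, wordProj, blockMap_ac_cons hab hca hcb, ← wordProj,
      wordProj_wordIncl_single hab hI]
    simp [leadRun_cons_of_ne hca]
  · rw [wordIncl_aa_cons hab, theta_apply, map_sub, map_sub, wordProj, blockMap_aa_cons hab,
      blockMap_ab_cons hab, ← wordProj, ih, leadRun_cons_self, leadRun_cons_self]
    simp only [Nat.even_add_one, not_not]
    split_ifs <;> simp [pow_succ, add_assoc]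
  · rw [wordIncl_ac_cons hab hca hcb, wordProj, blockMap_aa_cons hab]
    simp [leadRun_cons_self, leadRun_cons_of_ne hca]

lemma wordProj_rho_wordIncl (ha : par r a = 0) (hab : a ≠ b) {I : List (Fin m)} (hI : b ∉ I)
    (x : Fin m) : wordProj a b (rho r [a] (wordIncl a b (single (I, x) 1))) =
      if Even (leadRun a I.reverse) then single (I ++ [a], x) 1 else 0 := by
  refine avoiding_induction (a := a) (b := b)
    (motive := fun I => wordProj a b (rho r [a] (wordIncl a b (single (I, x) 1))) =
      if Even (leadRun a I.reverse) then single (I ++ [a], x) 1 else 0)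
    ?_ ?_ (fun c I hca hcb _ ih => ?_) (fun I ih => ?_) (fun c I hca hcb ih => ?_) hI
  · simp [wordIncl_nil, rho_single ha, wordProj, blockMap_a_nil hab, leadRun_nil]
  · have haa : single ([a, a], x) (1 : ℂ) = lam [a] (lam [a] (single ([], x) 1)) := by simp
    rw [wordIncl_a_nil hab, rho_single ha, List.singleton_append, haa, wordProj,
      blockMap_aa_cons hab]
    simp [leadRun_cons_self, leadRun_nil]
  · rw [wordIncl_cons hca hcb, rho_lam ha, wordProj, blockMap_cons hca hcb, ← wordProj, ih,
      List.reverse_cons, leadRun_append_cons_of_ne hca]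
    split_ifs <;> simp
  · rw [wordIncl_aa_cons hab, rho_theta ha, wordProj, blockMap_theta hab, ← wordProj, ih]
    simp only [List.reverse_cons, List.append_assoc, List.singleton_append,
      even_leadRun_append_pair]
    split_ifs <;> simp
  · rw [wordIncl_ac_cons hab hca hcb, rho_lam ha, rho_lam ha, wordProj,
      blockMap_ac_cons hab hca hcb, ← wordProj, ih, List.reverse_cons, List.reverse_cons,
      List.append_assoc, List.singleton_append, leadRun_append_cons_of_ne hca]
    split_ifs <;> simp

lemma modelDiff_single_of_ne (hab : a ≠ b) {I : List (Fin m)} {x : Fin m} (hx : x ≠ a) :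
    modelDiff r a b (single (I, x) 1) = 0 := by
  simp [modelDiff, endsDiff, relabel_wordIncl hab, hx]

lemma modelDiff_single_self (ha : par r a = 0) (hab : a ≠ b) {I : List (Fin m)} (hI : b ∉ I) :
    modelDiff r a b (single (I, a) 1) =
      (if Even (leadRun a I) then single (a :: I, b) ((-1) ^ (leadRun a I / 2)) else 0) +
        if Even (leadRun a I.reverse) then single (I ++ [a], b) 1 else 0 := by
  rw [← wordProj_lam_wordIncl hab hI, ← wordProj_rho_wordIncl ha hab hI]
  simp [modelDiff, endsDiff, relabel_wordIncl hab]

lemma modelDiff_replicate (ha : par r a = 0) (hab : a ≠ b) (n : ℕ) :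
    modelDiff r a b (single (List.replicate n a, a) 1) =
      if Even n then single (List.replicate (n + 1) a, b) ((-1) ^ (n / 2) + 1) else 0 := by
  rw [modelDiff_single_self ha hab fun h => hab (List.eq_of_mem_replicate h).symm,
    List.reverse_replicate, leadRun_replicate, ← List.replicate_succ, ← List.replicate_succ']
  split_ifs <;> simp

/-- The words of length `n` without the letter `b` whose initial run of `a`s has even length. -/
def evenWords (a b : Fin m) (n : ℕ) : Finset (List (Fin m)) :=
  (wordsAvoiding b n).filter fun I => Even (leadRun a I)

/-- The words indexing a basis of the coboundaries of the model in degree `n + 1`. The word `a^n`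
is left out when its coboundary has the coefficient `(-1)^(n/2) + 1 = 0`. -/
def basisWords (a b : Fin m) (n : ℕ) : Finset (List (Fin m)) :=
  if n % 4 = 2 then (evenWords a b n).erase (List.replicate n a) else evenWords a b n

lemma mem_evenWords {n : ℕ} {I : List (Fin m)} :
    I ∈ evenWords a b n ↔ I.length = n ∧ b ∉ I ∧ Even (leadRun a I) := by
  rw [evenWords, Finset.mem_filter, mem_wordsAvoiding, and_assoc]

lemma mem_basisWords {n : ℕ} {I : List (Fin m)} :
    I ∈ basisWords a b n ↔ I ∈ evenWords a b n ∧ (I = List.replicate n a → n % 4 ≠ 2) := by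
  rw [basisWords]
  split_ifs with hn <;> simp [hn, and_comm]

lemma basisWords_subset {n : ℕ} : basisWords a b n ⊆ evenWords a b n :=
  fun _ hI => (mem_basisWords.1 hI).1

lemma card_evenWords_zero : (evenWords a b 0).card = 1 := by
  simp [evenWords, wordsAvoiding, leadRun_nil, Finset.filter_singleton]

lemma card_evenWords_succ_add (hab : a ≠ b) (n : ℕ) :
    (evenWords a b (n + 1)).card + (evenWords a b n).card = (m - 1) ^ (n + 1) := by
  have odd_words : (wordsAvoiding b (n + 1)).filter (fun I => ¬Even (leadRun a I)) =
      (evenWords a b n).image (List.cons a) := by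
    ext I
    cases I with
    | nil => simp [leadRun_nil]
    | cons c I =>
      by_cases hc : c = a
      · subst hc
        simp [mem_wordsAvoiding, mem_evenWords, leadRun_cons_self, Nat.odd_add_one, hab.symm,
          and_assoc]
      · simp [leadRun_cons_of_ne hc, Ne.symm hc]
  have hsplit := Finset.card_filter_add_card_filter_not (s := wordsAvoiding b (n + 1))
    fun I => Even (leadRun a I)
  rwa [odd_words, Finset.card_image_of_injective _ List.cons_injective,
    card_wordsAvoiding] at hsplit

lemma card_basisWords_add (hab : a ≠ b) (n : ℕ) :
    (basisWords a b n).card + (if n % 4 = 2 then 1 else 0) = (evenWords a b n).card := by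
  rw [basisWords]
  split_ifs with hn
  · refine Finset.card_erase_add_one (mem_evenWords.2 ⟨List.length_replicate, fun h => ?_, ?_⟩)
    · exact hab (List.eq_of_mem_replicate h).symm
    · rw [leadRun_replicate, Nat.even_iff]
      omega
  · rfl

lemma linearIndependent_of_diagonal {K ι α : Type*} [Ring K] [NoZeroDivisors K] {v : ι → α →₀ K}
    (k : ι → α) (hne : ∀ i, v i (k i) ≠ 0) (hzero : ∀ i j, i ≠ j → v i (k j) = 0) :
    LinearIndependent K v := by
  rw [linearIndependent_iff']
  intro s g hg i hi
  have hgi := DFunLike.congr_fun hg (k i)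
  rw [Finsupp.finsetSum_apply, Finset.sum_eq_single_of_mem i hi fun j _ hj => by
    simp [hzero j i hj]] at hgi
  simpa [hne i] using hgi

lemma neg_one_pow_half {R : Type*} [Ring R] {n : ℕ} (hn : Even n) :
    (-1 : R) ^ (n / 2) = if n % 4 = 2 then -1 else 1 := by
  split_ifs
  · exact Odd.neg_one_pow (by grind)
  · exact Even.neg_one_pow (by grind)

lemma exists_modelDiff_single_apply (ha : par r a = 0) (hab : a ≠ b) {n : ℕ} {I : List (Fin m)}
    (hI : I ∈ basisWords a b n) : ∃ z : ℂ, z ≠ 0 ∧ ∀ J ∈ basisWords a b n,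
      modelDiff r a b (single (I, a) 1) (a :: J, b) = if I = J then z else 0 := by
  obtain ⟨hIn, hn⟩ := mem_basisWords.1 hI
  obtain ⟨rfl, hbI, heven⟩ := mem_evenWords.1 hIn
  by_cases hpure : I = List.replicate I.length a
  · have hIeven : Even I.length := by rwa [hpure, leadRun_replicate] at heven
    have hdiff := modelDiff_replicate (r := r) ha hab I.length
    rw [List.replicate_succ, ← hpure, if_pos hIeven, neg_one_pow_half hIeven,
      if_neg (hn hpure)] at hdiff
    exact ⟨1 + 1, by norm_num, fun J _ => by rw [hdiff, Finsupp.single_apply]; simp⟩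
  · refine ⟨(-1) ^ (leadRun a I / 2), by simp, fun J hJ => ?_⟩
    have hIJ := append_singleton_ne_cons heven (mem_evenWords.1 (basisWords_subset hJ)).2.2 hpure
    have hsnoc : (if Even (leadRun a I.reverse) then single (I ++ [a], b) 1 else 0 : Cochain m)
        (a :: J, b) = 0 := by
      split_ifs
      · exact Finsupp.single_eq_of_ne' fun h => hIJ (congrArg Prod.fst h)
      · rfl
    rw [modelDiff_single_self ha hab hbI, if_pos heven, Finsupp.add_apply, hsnoc, add_zero,
      Finsupp.single_apply]
    simp

lemma linearIndependent_modelDiff (ha : par r a = 0) (hab : a ≠ b) (n : ℕ) :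
    LinearIndependent ℂ fun I : basisWords a b n => modelDiff r a b (single (I.1, a) 1) := by
  refine linearIndependent_of_diagonal (fun I => (a :: I.1, b)) (fun I => ?_) fun I J hIJ => ?_
  · obtain ⟨z, hz, hI⟩ := exists_modelDiff_single_apply (r := r) ha hab I.2
    rwa [hI I.1 I.2, if_pos rfl]
  · obtain ⟨z, -, hI⟩ := exists_modelDiff_single_apply (r := r) ha hab I.2
    rw [hI J.1 J.2, if_neg fun h => hIJ (Subtype.ext h)]

lemma modelDiff_single_cons (ha : par r a = 0) (hab : a ≠ b) {I : List (Fin m)} (hbI : b ∉ I)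
    (heven : Even (leadRun a I)) (hpure : I ≠ List.replicate I.length a) :
    modelDiff r a b (single (a :: I, a) 1) = if Even (leadRun a I.reverse) then
      (-1 : ℂ) ^ (leadRun a I / 2) • modelDiff r a b (single (I ++ [a], a) 1) else 0 := by
  have hpure' : I.reverse ≠ List.replicate I.reverse.length a := fun h => hpure <| by
    rw [List.reverse_eq_iff, List.reverse_replicate, List.length_reverse] at h
    exact h
  rw [modelDiff_single_self ha hab (by simp [hbI, hab.symm]),
    modelDiff_single_self ha hab (by simp [hbI, hab.symm]), List.reverse_append,
    List.reverse_cons, List.reverse_singleton, List.singleton_append,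
    leadRun_append_of_ne_replicate hpure, leadRun_append_of_ne_replicate hpure',
    leadRun_cons_self, leadRun_cons_self]
  split_ifs with hrev <;> simp_all [Nat.even_add_one, ← mul_pow]

lemma append_singleton_mem_basisWords (hab : a ≠ b) {I : List (Fin m)} (hbI : b ∉ I)
    (heven : Even (leadRun a I)) (hpure : I ≠ List.replicate I.length a) :
    I ++ [a] ∈ basisWords a b (I.length + 1) := by
  refine mem_basisWords.2 ⟨mem_evenWords.2 ⟨by simp, by simp [hbI, hab.symm], ?_⟩, fun h => ?_⟩
  · rwa [leadRun_append_of_ne_replicate hpure]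
  · rw [List.replicate_succ'] at h
    exact absurd (List.append_cancel_right h) hpure

lemma modelDiff_replicate_eq_zero (ha : par r a = 0) (hab : a ≠ b) {n : ℕ}
    (hn : List.replicate n a ∉ basisWords a b n) :
    modelDiff r a b (single (List.replicate n a, a) 1) = 0 := by
  rw [modelDiff_replicate ha hab]
  by_cases heven : Even n
  · have hmem : List.replicate n a ∈ evenWords a b n := mem_evenWords.2
      ⟨by simp, fun h => hab (List.eq_of_mem_replicate h).symm, by rwa [leadRun_replicate]⟩
    have hn4 : n % 4 = 2 := by simpa [mem_basisWords, hmem] using hn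
    rw [if_pos heven, neg_one_pow_half heven, if_pos hn4, neg_add_cancel, Finsupp.single_zero]
  · rw [if_neg heven]

lemma modelDiff_single_mem_span (ha : par r a = 0) (hab : a ≠ b) {I : List (Fin m)} (hbI : b ∉ I)
    (x : Fin m) : modelDiff r a b (single (I, x) 1) ∈ span ℂ
      (Set.range fun J : basisWords a b I.length => modelDiff r a b (single (J.1, a) 1)) := by
  by_cases hx : x = a
  swap
  · simp [modelDiff_single_of_ne hab hx]
  have basis_mem {n J} (hJ : J ∈ basisWords a b n) : modelDiff r a b (single (J, a) 1) ∈
      span ℂ (Set.range fun J : basisWords a b n => modelDiff r a b (single (J.1, a) 1)) :=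
    subset_span ⟨⟨J, hJ⟩, rfl⟩
  rw [hx]
  by_cases hI : I ∈ basisWords a b I.length
  · exact basis_mem hI
  by_cases hpure : I = List.replicate I.length a
  · have hreplicate : List.replicate I.length a ∉ basisWords a b I.length := by rwa [← hpure]
    have hzero := modelDiff_replicate_eq_zero (r := r) ha hab hreplicate
    rw [← hpure] at hzero
    exact hzero ▸ zero_mem _
  · have hodd : ¬Even (leadRun a I) := fun heven =>
      hI (mem_basisWords.2 ⟨mem_evenWords.2 ⟨rfl, hbI, heven⟩, fun h => absurd h hpure⟩)
    obtain ⟨J, rfl⟩ : ∃ J, I = a :: J := exists_cons_of_not_even_leadRun hodd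
    have hJpure : J ≠ List.replicate J.length a := fun h =>
      hpure (by rw [List.length_cons, List.replicate_succ, ← h])
    rw [List.mem_cons, not_or] at hbI
    rw [leadRun_cons_self, Nat.even_add_one, not_not] at hodd
    rw [modelDiff_single_cons ha hab hbI.2 hodd hJpure]
    split_ifs
    · exact smul_mem _ _ (basis_mem (append_singleton_mem_basisWords hab hbI.2 hodd hJpure))
    · exact zero_mem _

lemma finrank_coboundaries_modelDiff (ha : par r a = 0) (hab : a ≠ b) (n : ℕ) :
    Module.finrank ℂ (coboundaries (modelDiff r a b) (Model b) (n + 1)) =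
      (basisWords a b n).card := by
  have hspan : coboundaries (modelDiff r a b) (Model b) (n + 1) =
      span ℂ (Set.range fun I : basisWords a b n => modelDiff r a b (single (I.1, a) 1)) := by
    refine le_antisymm (map_Model_le ?_) (span_le.2 ?_)
    · rintro I rfl hbI x
      exact modelDiff_single_mem_span ha hab hbI x
    · rintro _ ⟨⟨I, hI⟩, rfl⟩
      obtain ⟨rfl, hbI, -⟩ := mem_evenWords.1 (basisWords_subset hI)
      exact mem_map_of_mem (single_mem_Model hbI a 1)
  rw [hspan, finrank_span_eq_card (linearIndependent_modelDiff ha hab n), Fintype.card_coe]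

lemma finrank_coboundaries_add (ha : par r a = 0) (hab : a ≠ b) (n : ℕ) :
    Module.finrank ℂ (coboundaries (modelDiff r a b) (Model b) n) +
      Module.finrank ℂ (coboundaries (modelDiff r a b) (Model b) (n + 1)) +
      (if n % 4 = 2 ∨ n % 4 = 3 then 1 else 0) = (m - 1) ^ n := by
  rw [finrank_coboundaries_modelDiff ha hab]
  have hcard := card_basisWords_add hab n
  cases n with
  | zero =>
    have hbot : coboundaries (modelDiff r a b) (Model b) 0 = ⊥ := Submodule.map_bot _
    rw [hbot, finrank_bot]
    simpa [card_evenWords_zero] using hcard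
  | succ n =>
    rw [finrank_coboundaries_modelDiff ha hab, ← card_evenWords_succ_add hab, ← hcard,
      ← card_basisWords_add hab n]
    grind

theorem finrank_cohomology_modelDiff (ha : par r a = 0) (hb : par r b = 1) (n : ℕ) :
    Module.finrank ℂ (Cohomology (modelDiff r a b) (Model b) n) =
      (m - 1) ^ (n + 1) + if n % 4 = 2 ∨ n % 4 = 3 then 1 else 0 := by
  have hab := ne_of_par ha hb
  have hC := map_modelDiff_Model_le ha hab
  have htotal := finrank_cohomology_add (modelDiff_mul_modelDiff ha hb) hC n
  have hcob := finrank_coboundaries_add ha hab n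
  have hm : m = m - 1 + 1 := by have := a.pos; omega
  have hpow : (m - 1) ^ n * m = (m - 1) ^ (n + 1) + (m - 1) ^ n := by
    nth_rw 2 [hm]
    ring
  rw [finrank_Model, hpow, ← hcob] at htotal
  omega

lemma finrank_Hfull (n : ℕ) :
    Module.finrank ℂ (Hfull r a b n) = Module.finrank ℂ (Cohomology (Dop r a b) (Cn m) n) := by
  have hB : Bfull r a b n = coboundaries (Dop r a b) (Cn m) n := by
    cases n with
    | zero => exact (Submodule.map_bot _).symm
    | succ n => rfl
  unfold Hfull
  rw [hB]
  rfl

end Rank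

theorem cohomology_dim_e1_general {r m : ℕ} {a b : Fin m} (ha : (a : ℕ) < r) (hb : r ≤ (b : ℕ))
    (n : ℕ) : Module.finrank ℂ (Hfull r a b n) =
      if n % 4 = 0 ∨ n % 4 = 1 then (m - 1) ^ (n + 1) else (m - 1) ^ (n + 1) + 1 := by
  have hpa : par r a = 0 := if_pos ha
  have hpb : par r b = 1 := if_neg hb.not_gt
  rw [finrank_Hfull, finrank_cohomology_Dop hpa hpb, finrank_cohomology_modelDiff hpa hpb]
  grind

/-- the cohomology of the codifferential `d = ψ^{e₁e₁}_{f_s}` on an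
`r|s`-dimensional graded space has `h^n = (r+s−1)^{n+1}` for `n ≡ 0, 1 (mod 4)` and
`h^n = (r+s−1)^{n+1} + 1` for `n ≡ 2, 3 (mod 4)`. -/
theorem cohomology_dim_e1 (r s : ℕ) (hr : 1 ≤ r) (hs : 1 ≤ s)
    (e1 fs : Fin (r + s)) (he1 : (e1 : ℕ) = 0) (hfs : (fs : ℕ) = r + s - 1) :
    ∀ n : ℕ, Module.finrank ℂ (Hfull r e1 fs n) =
      if n % 4 = 0 ∨ n % 4 = 1 then (r + s - 1) ^ (n + 1) else (r + s - 1) ^ (n + 1) + 1 :=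
  cohomology_dim_e1_general (by omega) (by omega)

end NilpotentCohomology
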